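/- Let E, F be finite sets of variables and S, K ∈ ℕ with S > 0 and K > 0. Then B(E, S) ≤_T B(F, K) if and only if F ⊆ E and S ≤ K. -/

import Mathlib

/-- The impredicative maximum on natural numbers. -/
def imaxN : ℕ → ℕ → ℕ
  | _, 0 => 0
  | i, (j+1) => max i (j+1)

/-- Sublevels A(E,x,S) and B(E,S). -/
inductive SubLvl where
  | A : Finset ℕ → ℕ → ℕ → SubLvl
  | B : Finset ℕ → ℕ → SubLvl
deriving DecidableEq

/-- Value of a sublevel under a valuation. -/
def evalS (σ : ℕ → ℕ) : SubLvl → ℕ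
  | .A E x S => if ∃ y ∈ E, σ y = 0 then 0 else σ x + S
  | .B E S => if ∃ y ∈ E, σ y = 0 then 0 else S

/-- Wellformed sublevels. -/
def Wf : SubLvl → Prop
  | .A E x _ => x ∈ E
  | .B _ S => 0 < S

/-- Semantic comparison of sublevels. -/
def leT (u v : SubLvl) : Prop := ∀ σ : ℕ → ℕ, evalS σ u ≤ evalS σ v

theorem B_le_B_iff (E F : Finset ℕ) (S K : ℕ) (hS : 0 < S) (hK : 0 < K) :
    leT (SubLvl.B E S) (SubLvl.B F K) ↔ F ⊆ E ∧ S ≤ K := by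
  constructor
  · intro h
    constructor
    · intro x hx
      by_contra hxE
      have h1 := h (fun y => if y = x then 0 else 1)
      have hE : ¬ ∃ y ∈ E, (if y = x then 0 else 1) = 0 := by
        rintro ⟨y, hy, h0⟩
        by_cases hyx : y = x
        · exact hxE (hyx ▸ hy)
        · simp [hyx] at h0
      have hF : ∃ y ∈ F, (if y = x then 0 else 1) = 0 := ⟨x, hx, by simp⟩
      simp only [evalS] at h1
      rw [if_neg hE, if_pos hF] at h1
      omega
    · have h1 := h (fun _ => 1)
      simpa [evalS] using h1
  · rintro ⟨hFE, hSK⟩ σ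
    simp only [evalS]
    by_cases hE : ∃ y ∈ E, σ y = 0
    · rw [if_pos hE]
      exact Nat.zero_le _
    · have hF : ¬ ∃ y ∈ F, σ y = 0 := fun ⟨y, hy, h0⟩ => hE ⟨y, hFE hy, h0⟩
      rw [if_neg hE, if_neg hF]
      exact hSK
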